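/- Let r, s be nonzero real numbers with r ≠ s, and let f, Δ : [-π,π] → ℝ be continuous functions with f(θ) > 0 for all θ ∈ [-π,π]. Define δ_{r,s}(f₁,f₂) := (1/r)·log( ∫ (f₁/f₂)^r dμ ) − (1/s)·log( ∫ (f₁/f₂)^s dμ ). Then lim_{ε→0} δ_{r,s}(f, f+εΔ)/ε² = ((r−s)/2)·g_f(Δ), where g_f(Δ) := ∫ (Δ/f)² dμ − ( ∫ (Δ/f) dμ )²; that is, the quadratic term of δ_{r,s}(f, f+Δ) in the perturbation Δ is, modulo a scaling factor, the same Riemannian pseudo-metric g_f(Δ) as arises from δ_{a/g}. -/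

import Mathlib

open MeasureTheory Real Filter Topology

/-- The normalized Lebesgue measure `dθ/(2π)` on `[-π, π]`. -/
noncomputable def μ : Measure ℝ :=
  (ENNReal.ofReal (2 * Real.pi)⁻¹) • (volume.restrict (Set.Icc (-Real.pi) Real.pi))

/-- The arithmetic/geometric divergence between spectral densities. -/
noncomputable def δag (f₁ f₂ : ℝ → ℝ) : ℝ :=
  Real.log (∫ θ, f₁ θ / f₂ θ ∂μ) - ∫ θ, Real.log (f₁ θ / f₂ θ) ∂μ

/-- The Riemannian pseudo-metric at `f` applied to a perturbation `Δ`. -/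
noncomputable def gf (f Δ : ℝ → ℝ) : ℝ :=
  (∫ θ, (Δ θ / f θ) ^ 2 ∂μ) - (∫ θ, Δ θ / f θ ∂μ) ^ 2

/-- The divergence comparing generalized means of order `r` and `s`. -/
noncomputable def δrs (r s : ℝ) (f₁ f₂ : ℝ → ℝ) : ℝ :=
  (1 / r) * Real.log (∫ θ, (f₁ θ / f₂ θ) ^ r ∂μ) -
    (1 / s) * Real.log (∫ θ, (f₁ θ / f₂ θ) ^ s ∂μ)

/-!
Write `X = Δ / f`. For every `ε`, `f / (f + ε Δ) = (1 + ε X)⁻¹`, so `δ_{r,s}(f, f + ε Δ)` is the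
difference of the log power means of orders `r` and `s` of one and the same perturbation of `1`.
As `X` is essentially bounded, second-order expansions may be integrated term by term, and the
log power mean of order `r` of `(1 + ε X)⁻¹` is
`-ε ∫ X + ε² ((r + 1) / 2 * ∫ X² - r / 2 * (∫ X)²) + o(ε²)`. The first-order term does not depend
on `r`, and the coefficients of `ε²` for `r` and `s` differ by `(r - s) / 2` times the variance
of `X`.
-/

open Asymptotics
open scoped ENNReal

/-- The second-order expansion `g y = g x + b (y - x) + c (y - x)² + o((y - x)²)` as `y → x`.
The coefficient `c` plays the role of `g'' x / 2`, but `g` need not be twice differentiable. -/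
def HasQuadraticExpansionAt (g : ℝ → ℝ) (b c x : ℝ) : Prop :=
  (fun y => g y - g x - b * (y - x) - c * (y - x) ^ 2) =o[𝓝 x] fun y => (y - x) ^ 2

namespace HasQuadraticExpansionAt

variable {g h : ℝ → ℝ} {b c b' c' x : ℝ}

theorem of_hasDerivAt_hasDerivAt {g' : ℝ → ℝ} (hg : ∀ᶠ y in 𝓝 x, HasDerivAt g (g' y) y)
    (hg' : HasDerivAt g' c x) : HasQuadraticExpansionAt g (g' x) (c / 2) x := by
  obtain ⟨η, hη, hball⟩ := Metric.eventually_nhds_iff_ball.1 hg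
  have hderiv : ∀ y ∈ Metric.ball x η,
      HasDerivWithinAt (fun y => g y - g' x * (y - x) - c / 2 * (y - x) ^ 2)
        (g' y - g' x - (y - x) * c) (Metric.ball x η) y := by
    intro y hy
    have hsub : HasDerivAt (fun y => y - x) 1 y := (hasDerivAt_id y).sub_const x
    refine HasDerivAt.hasDerivWithinAt ?_
    convert! ((hball y hy).sub (hsub.const_mul (g' x))).sub ((hsub.pow 2).const_mul (c / 2)) using 1
    push_cast
    ring
  have hrem := (convex_ball x η).isLittleO_pow_succ_real (n := 1) (Metric.mem_ball_self hη) hderiv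
    (by simpa only [pow_one, smul_eq_mul] using hg'.isLittleO.mono nhdsWithin_le_nhds)
  rw [nhdsWithin_eq_nhds.2 (Metric.ball_mem_nhds x hη)] at hrem
  refine hrem.congr_left fun y => ?_
  ring

theorem hasDerivAt (hg : HasQuadraticExpansionAt g b c x) : HasDerivAt g b x := by
  have hsq : (fun y => (y - x) ^ 2) =o[𝓝 x] fun y => y - x := by
    simpa only [norm_eq_abs, sq_abs] using isLittleO_pow_sub_sub x one_lt_two
  refine .of_isLittleO (((hg.trans hsq).add (hsq.const_mul_left c)).congr_left fun y => ?_)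
  simp only [smul_eq_mul]
  ring

theorem congr_coeff (hg : HasQuadraticExpansionAt g b c x) (hb : b = b') (hc : c = c') :
    HasQuadraticExpansionAt g b' c' x :=
  hb ▸ hc ▸ hg

theorem sub (hg : HasQuadraticExpansionAt g b c x) (hh : HasQuadraticExpansionAt h b' c' x) :
    HasQuadraticExpansionAt (fun y => g y - h y) (b - b') (c - c') x :=
  (IsLittleO.sub hg hh).congr_left fun y => by ring

theorem const_mul (a : ℝ) (hg : HasQuadraticExpansionAt g b c x) :
    HasQuadraticExpansionAt (fun y => a * g y) (a * b) (a * c) x :=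
  (IsLittleO.const_mul_left hg a).congr_left fun y => by ring

theorem comp (hh : HasQuadraticExpansionAt h b' c' (g x)) (hg : HasQuadraticExpansionAt g b c x) :
    HasQuadraticExpansionAt (h ∘ g) (b' * b) (b' * c + c' * b ^ 2) x := by
  have hO : (fun y => g y - g x) =O[𝓝 x] fun y => y - x := hg.hasDerivAt.isBigO_sub
  have hlin : (fun y => g y - g x - (y - x) * b) =o[𝓝 x] fun y => y - x :=
    hg.hasDerivAt.isLittleO
  have hsum : (fun y => g y - g x + b * (y - x)) =O[𝓝 x] fun y => y - x :=
    hO.add (isBigO_const_mul_self b _ _)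
  have hsq : (fun y => (g y - g x) ^ 2 - b ^ 2 * (y - x) ^ 2) =o[𝓝 x] fun y => (y - x) ^ 2 :=
    (hlin.mul_isBigO hsum).congr (fun y => by ring) fun y => by ring
  have houter : (fun y => h (g y) - h (g x) - b' * (g y - g x) - c' * (g y - g x) ^ 2)
      =o[𝓝 x] fun y => (y - x) ^ 2 :=
    (hh.comp_tendsto hg.hasDerivAt.continuousAt).trans_isBigO (hO.pow 2)
  refine ((houter.add (IsLittleO.const_mul_left hg b')).add (hsq.const_mul_left c')).congr_left
    fun y => ?_
  simp only [Function.comp_apply]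
  ring

theorem tendsto_sub_div_sq (hg : HasQuadraticExpansionAt g 0 c x) :
    Tendsto (fun y => (g y - g x) / (y - x) ^ 2) (𝓝[≠] x) (𝓝 c) := by
  have hrem : Tendsto (fun y => (g y - g x - 0 * (y - x) - c * (y - x) ^ 2) / (y - x) ^ 2)
      (𝓝[≠] x) (𝓝 0) :=
    (IsLittleO.tendsto_div_nhds_zero hg).mono_left nhdsWithin_le_nhds
  rw [← zero_add c]
  refine (hrem.add_const c).congr' ?_
  filter_upwards [self_mem_nhdsWithin] with y hy
  have : y - x ≠ 0 := sub_ne_zero.2 hy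
  field_simp
  ring

end HasQuadraticExpansionAt

theorem hasQuadraticExpansionAt_rpow_const (p : ℝ) {x : ℝ} (hx : x ≠ 0) :
    HasQuadraticExpansionAt (fun y => y ^ p) (p * x ^ (p - 1))
      (p * ((p - 1) * x ^ (p - 1 - 1)) / 2) x := by
  refine .of_hasDerivAt_hasDerivAt (g' := fun y => p * y ^ (p - 1)) ?_
    ((hasDerivAt_rpow_const (.inl hx)).const_mul p)
  filter_upwards [eventually_ne_nhds hx] with y hy using hasDerivAt_rpow_const (.inl hy)

theorem hasQuadraticExpansionAt_log {x : ℝ} (hx : x ≠ 0) :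
    HasQuadraticExpansionAt log x⁻¹ (-(x ^ 2)⁻¹ / 2) x := by
  refine .of_hasDerivAt_hasDerivAt ?_ (hasDerivAt_inv hx)
  filter_upwards [eventually_ne_nhds hx] with y hy using hasDerivAt_log hy

section Integral

variable {α : Type*} [MeasurableSpace α] {ν : Measure α} {X : α → ℝ} {g : ℝ → ℝ} {b c x : ℝ}

theorem eventually_ae_comp_add_mul {p : ℝ → Prop} (hp : ∀ᶠ y in 𝓝 x, p y)
    (hX : MemLp X ∞ ν) : ∀ᶠ t in 𝓝 (0 : ℝ), ∀ᵐ a ∂ν, p (x + t * X a) := by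
  obtain ⟨η, hη, hball⟩ := Metric.eventually_nhds_iff.1 hp
  have hsmall : ∀ᶠ t : ℝ in 𝓝 0, |t| * lpNorm X ∞ ν < η :=
    ContinuousAt.eventually_lt (by fun_prop) continuousAt_const (by simpa using hη)
  filter_upwards [hsmall] with t ht
  filter_upwards [ae_le_lpNorm_exponent_top hX] with a ha
  refine hball ?_
  calc dist (x + t * X a) x = |t| * ‖X a‖ := by simp
    _ ≤ |t| * lpNorm X ∞ ν := by gcongr
    _ < η := ht

theorem isLittleO_integral_comp_add_mul {E : Type*} [NormedAddCommGroup E] [NormedSpace ℝ E]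
    [IsFiniteMeasure ν] {R : ℝ → E} {n : ℕ} (hR : R =o[𝓝 x] fun y => (y - x) ^ n)
    (hX : MemLp X ∞ ν) : (fun t => ∫ a, R (x + t * X a) ∂ν) =o[𝓝 0] fun t : ℝ => t ^ n := by
  set K := lpNorm X ∞ ν ^ n * ν.real Set.univ
  have hK : 0 ≤ K := mul_nonneg (pow_nonneg lpNorm_nonneg _) measureReal_nonneg
  refine isLittleO_iff.2 fun η hη => ?_
  have hη' : 0 < η / (K + 1) := by positivity
  filter_upwards [eventually_ae_comp_add_mul (isLittleO_iff.1 hR hη') hX] with t ht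
  have hbound : ∀ᵐ a ∂ν, ‖R (x + t * X a)‖ ≤ η / (K + 1) * (‖t‖ * lpNorm X ∞ ν) ^ n := by
    filter_upwards [ht, ae_le_lpNorm_exponent_top hX] with a hRa hXa
    refine hRa.trans ?_
    rw [add_sub_cancel_left, norm_pow, norm_mul]
    gcongr
  calc ‖∫ a, R (x + t * X a) ∂ν‖
      ≤ η / (K + 1) * (‖t‖ * lpNorm X ∞ ν) ^ n * ν.real Set.univ :=
        norm_integral_le_of_norm_le_const hbound
    _ = η * (K / (K + 1)) * ‖t ^ n‖ := by simp only [K, mul_pow, norm_pow]; ring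
    _ ≤ η * 1 * ‖t ^ n‖ := by gcongr; exact div_le_one_of_le₀ (by linarith) (by linarith)
    _ = η * ‖t ^ n‖ := by rw [mul_one]

theorem eventually_integrable_comp_add_mul [IsFiniteMeasure ν] (hg : ContinuousAt g x)
    (hgm : Measurable g) (hX : MemLp X ∞ ν) :
    ∀ᶠ t in 𝓝 (0 : ℝ), Integrable (fun a => g (x + t * X a)) ν := by
  have hbdd : ∀ᶠ y in 𝓝 x, ‖g y‖ ≤ ‖g x‖ + 1 :=
    (hg.norm.eventually_lt_const (lt_add_one _)).mono fun _ => le_of_lt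
  filter_upwards [eventually_ae_comp_add_mul hbdd hX] with t ht
  have hXm : AEMeasurable X ν := hX.aestronglyMeasurable.aemeasurable
  exact .of_bound (hgm.comp_aemeasurable (by fun_prop)).aestronglyMeasurable _ ht

theorem HasQuadraticExpansionAt.integral_comp_add_mul [IsFiniteMeasure ν]
    (hg : HasQuadraticExpansionAt g b c x) (hgm : Measurable g) (hX : MemLp X ∞ ν) :
    HasQuadraticExpansionAt (fun t => ∫ a, g (x + t * X a) ∂ν)
      (b * ∫ a, X a ∂ν) (c * ∫ a, X a ^ 2 ∂ν) 0 := by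
  have hX1 : Integrable X ν := hX.integrable le_top
  have hX2 : Integrable (fun a => X a ^ 2) ν := (hX.mono_exponent le_top).integrable_sq
  refine (isLittleO_integral_comp_add_mul hg hX).congr' ?_ (by simp)
  filter_upwards [eventually_integrable_comp_add_mul hg.hasDerivAt.continuousAt hgm hX] with t ht
  simp only [add_sub_cancel_left, mul_pow, ← mul_assoc, zero_mul, add_zero, sub_zero]
  have hconst : Integrable (fun a => g (x + t * X a) - g x) ν := ht.sub (integrable_const _)
  have hlin : Integrable (fun a => g (x + t * X a) - g x - b * t * X a) ν :=
    hconst.sub (hX1.const_mul _)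
  rw [integral_sub hlin (hX2.const_mul _), integral_sub hconst (hX1.const_mul _),
    integral_sub ht (integrable_const _), integral_const_mul, integral_const_mul]
  ring

/-- The logarithm of the power mean of order `p` of `g` with respect to `ν`; `δrs r s f₁ f₂` is the
difference of those of orders `r` and `s` of `f₁ / f₂`. The value at `p = 0` is the junk value `0`,
not the geometric mean. -/
noncomputable def logPowerMean (ν : Measure α) (p : ℝ) (g : α → ℝ) : ℝ :=
  1 / p * log (∫ a, g a ^ p ∂ν)

theorem logPowerMean_congr_ae {p : ℝ} {g₁ g₂ : α → ℝ} (h : g₁ =ᵐ[ν] g₂) :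
    logPowerMean ν p g₁ = logPowerMean ν p g₂ :=
  congrArg (fun I => 1 / p * log I) (integral_congr_ae (h.fun_comp (· ^ p)))

theorem HasQuadraticExpansionAt.logPowerMean_comp_add_mul [IsProbabilityMeasure ν] {p : ℝ}
    (hp : p ≠ 0) (hg : HasQuadraticExpansionAt g b c x) (hgx : g x = 1) (hgm : Measurable g)
    (hX : MemLp X ∞ ν) :
    HasQuadraticExpansionAt (fun t => logPowerMean ν p fun a => g (x + t * X a))
      (b * ∫ a, X a ∂ν)
      ((c + (p - 1) / 2 * b ^ 2) * ∫ a, X a ^ 2 ∂ν - p / 2 * b ^ 2 * (∫ a, X a ∂ν) ^ 2) 0 := by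
  have hpow : HasQuadraticExpansionAt (fun y => g y ^ p) (p * b)
      (p * c + p * (p - 1) / 2 * b ^ 2) x := by
    have hrpow := hasQuadraticExpansionAt_rpow_const p (hgx.trans_ne one_ne_zero)
    refine (hrpow.comp hg).congr_coeff ?_ ?_ <;> rw [hgx] <;> simp only [one_rpow] <;> ring
  have hint := hpow.integral_comp_add_mul (hgm.pow_const p) hX
  have hint0 : ∫ a, g (x + 0 * X a) ^ p ∂ν = 1 := by simp [hgx]
  have hlog := hasQuadraticExpansionAt_log (hint0.trans_ne one_ne_zero)
  refine ((hlog.comp hint).const_mul (1 / p)).congr_coeff ?_ ?_ <;> rw [hint0] <;> field_simp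
  ring

end Integral

instance : IsProbabilityMeasure μ := by
  refine ⟨?_⟩
  have hlength : (2 * π)⁻¹ * (π - -π) = 1 := by field_simp; ring
  rw [μ, Measure.smul_apply, Measure.restrict_apply_univ, volume_Icc, smul_eq_mul,
    ← ENNReal.ofReal_mul (by positivity), hlength, ENNReal.ofReal_one]

theorem ae_mem_Icc_μ : ∀ᵐ θ ∂μ, θ ∈ Set.Icc (-π) π :=
  Measure.ae_smul_measure (ae_restrict_mem measurableSet_Icc) _

theorem memLp_top_μ_of_continuousOn {g : ℝ → ℝ} (hg : ContinuousOn g (Set.Icc (-π) π)) :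
    MemLp g ∞ μ := by
  obtain ⟨M, hM⟩ := isCompact_Icc.exists_bound_of_continuousOn hg
  exact memLp_top_of_bound ((hg.aestronglyMeasurable measurableSet_Icc).smul_measure _) M
    (ae_mem_Icc_μ.mono hM)

theorem δrs_add_mul_eq_logPowerMean_sub (r s ε : ℝ) {f Δ : ℝ → ℝ} (hf : ∀ᵐ θ ∂μ, f θ ≠ 0) :
    δrs r s f (fun θ => f θ + ε * Δ θ) =
      logPowerMean μ r (fun θ => (1 + ε * (Δ θ / f θ))⁻¹) -
        logPowerMean μ s (fun θ => (1 + ε * (Δ θ / f θ))⁻¹) := by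
  have hratio : (fun θ => f θ / (f θ + ε * Δ θ)) =ᵐ[μ] fun θ => (1 + ε * (Δ θ / f θ))⁻¹ := by
    filter_upwards [hf] with θ hθ
    rw [← inv_div, add_div, div_self hθ, mul_div_assoc]
  rw [← logPowerMean_congr_ae hratio, ← logPowerMean_congr_ae hratio]
  rfl

theorem δrs_quadratic_term_general {r s : ℝ} (hr : r ≠ 0) (hs : s ≠ 0) {f Δ : ℝ → ℝ}
    (hf : ∀ᵐ θ ∂μ, f θ ≠ 0) (hX : MemLp (fun θ => Δ θ / f θ) ∞ μ) :
    Tendsto (fun ε : ℝ => δrs r s f (fun θ => f θ + ε * Δ θ) / ε ^ 2)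
      (𝓝[≠] 0) (𝓝 (((r - s) / 2) * gf f Δ)) := by
  have hinv : HasQuadraticExpansionAt (fun y => y⁻¹) (-1) 1 1 := by
    simpa [rpow_neg_one] using hasQuadraticExpansionAt_rpow_const (-1) one_ne_zero
  have hmean {p : ℝ} (hp : p ≠ 0) :=
    hinv.logPowerMean_comp_add_mul hp inv_one measurable_inv hX
  have hdiff : HasQuadraticExpansionAt (fun ε => δrs r s f (fun θ => f θ + ε * Δ θ))
      0 ((r - s) / 2 * gf f Δ) 0 := by
    simp only [δrs_add_mul_eq_logPowerMean_sub r s _ hf]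
    refine ((hmean hr).sub (hmean hs)).congr_coeff (sub_self _) ?_
    rw [gf]
    ring
  have hzero : δrs r s f (fun θ => f θ + 0 * Δ θ) = 0 := by
    rw [δrs_add_mul_eq_logPowerMean_sub r s 0 hf]
    simp [logPowerMean]
  simpa only [hzero, sub_zero] using hdiff.tendsto_sub_div_sq

theorem δrs_quadratic_term (r s : ℝ) (hr : r ≠ 0) (hs : s ≠ 0) (hrs : r ≠ s)
    (f Δ : ℝ → ℝ) (hf : Continuous f) (hΔ : Continuous Δ)
    (hfpos : ∀ θ ∈ Set.Icc (-Real.pi) Real.pi, 0 < f θ) :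
    Tendsto (fun ε : ℝ => δrs r s f (fun θ => f θ + ε * Δ θ) / ε ^ 2)
      (𝓝[≠] 0) (𝓝 (((r - s) / 2) * gf f Δ)) :=
  δrs_quadratic_term_general hr hs (ae_mem_Icc_μ.mono fun θ hθ => (hfpos θ hθ).ne')
    (memLp_top_μ_of_continuousOn
      (hΔ.continuousOn.div hf.continuousOn fun θ hθ => (hfpos θ hθ).ne'))
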